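/- Let μ₁, μ₂, ρ₁, ρ₂ > 0. Then r₂(z) ≠ 0 for every z ∈ ℂ with Re z ≥ 0. -/

import Mathlib

open Complex

/-- `ω(z) = (1 + ρ z/μ)^{1/2}`, principal branch. -/
noncomputable def omegaSym (μ ρ : ℝ) (z : ℂ) : ℂ :=
  (1 + (ρ : ℂ) * z / (μ : ℂ)) ^ ((1 : ℂ)/2)

/-- The reduced Lopatinskii determinant `r₂` arising from the symbol of `S_λ^{22}`. -/
noncomputable def r2Sym (μ₁ μ₂ ρ₁ ρ₂ : ℝ) (z : ℂ) : ℂ :=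
  (omegaSym μ₁ ρ₁ z + omegaSym μ₂ ρ₂ z) * (omegaSym μ₁ ρ₁ z + 1) * (omegaSym μ₂ ρ₂ z + 1)
  + 2 * (omegaSym μ₁ ρ₁ z - 1) * (omegaSym μ₂ ρ₂ z - 1)
  + ((μ₂ : ℂ)/(μ₁ : ℂ)) * (2 * (omegaSym μ₂ ρ₂ z - 1)
      + (omegaSym μ₂ ρ₂ z ^ 2 + 1) * (omegaSym μ₂ ρ₂ z + 1))
  + ((μ₁ : ℂ)/(μ₂ : ℂ)) * (2 * (omegaSym μ₁ ρ₁ z - 1)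
      + (omegaSym μ₁ ρ₁ z ^ 2 + 1) * (omegaSym μ₁ ρ₁ z + 1))

/-!
For `Im z ≥ 0` both roots `ω₁(z)`, `ω₂(z)` lie in the sector `0 ≤ arg ≤ π/4`, and `ω₁(z) - 1`,
`ω₂(z) - 1` lie in the closed first quadrant. A product of two elements of the sector stays in the
quadrant, and a product of two elements of the quadrant has nonnegative imaginary part. This yields
`Im r₂(z) ≥ 2 (μ₂/μ₁) Im ω₂(z) + 2 (μ₁/μ₂) Im ω₁(z)`. If `r₂(z)` vanished, both roots would
therefore be real and at least `1`, where `r₂` is positive.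
-/

open ComplexConjugate

/-- The closed first quadrant of `ℂ`, as an additive submonoid so that it is visibly closed
under sums. -/
def firstQuadrant : AddSubmonoid ℂ where
  carrier := {z | 0 ≤ z.re ∧ 0 ≤ z.im}
  zero_mem' := ⟨le_rfl, le_rfl⟩
  add_mem' hz hw := ⟨add_nonneg hz.1 hw.1, add_nonneg hz.2 hw.2⟩

/-- The closed sector `0 ≤ arg z ≤ π/4` of `ℂ`, vertex included, as an additive submonoid. -/
def firstOctant : AddSubmonoid ℂ where
  carrier := {z | 0 ≤ z.im ∧ z.im ≤ z.re}
  zero_mem' := ⟨le_rfl, le_rfl⟩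
  add_mem' hz hw := ⟨add_nonneg hz.1 hw.1, add_le_add hz.2 hw.2⟩

section Sectors

variable {z w : ℂ}

lemma mem_firstQuadrant : z ∈ firstQuadrant ↔ 0 ≤ z.re ∧ 0 ≤ z.im := Iff.rfl

lemma mem_firstOctant : z ∈ firstOctant ↔ 0 ≤ z.im ∧ z.im ≤ z.re := Iff.rfl

lemma one_mem_firstOctant : (1 : ℂ) ∈ firstOctant := by
  simp [mem_firstOctant]

lemma firstOctant_le_firstQuadrant : firstOctant ≤ firstQuadrant :=
  fun _ hz => ⟨hz.1.trans hz.2, hz.1⟩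

lemma mul_mem_firstQuadrant_of_mem_firstOctant (hz : z ∈ firstOctant) (hw : w ∈ firstOctant) :
    z * w ∈ firstQuadrant := by
  obtain ⟨hz_im, hz_le⟩ := hz
  obtain ⟨hw_im, hw_le⟩ := hw
  have hz_re := hz_im.trans hz_le
  have hw_re := hw_im.trans hw_le
  rw [mem_firstQuadrant, mul_re, mul_im]
  exact ⟨sub_nonneg.2 (mul_le_mul hz_le hw_le hw_im hz_re), by positivity⟩

lemma im_mul_nonneg_of_mem_firstQuadrant (hz : z ∈ firstQuadrant) (hw : w ∈ firstQuadrant) :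
    0 ≤ (z * w).im := by
  rw [mul_im]
  exact add_nonneg (mul_nonneg hz.1 hw.2) (mul_nonneg hz.2 hw.1)

lemma cpow_inv_two_mem_firstOctant (hre : 0 ≤ z.re) (him : 0 ≤ z.im) :
    z ^ (2⁻¹ : ℂ) ∈ firstOctant := by
  rw [mem_firstOctant, cpow_inv_two_re, cpow_inv_two_im_eq_sqrt him]
  exact ⟨Real.sqrt_nonneg _, Real.sqrt_le_sqrt (by linarith)⟩

lemma cpow_inv_two_sub_one_mem_firstQuadrant (hre : 1 ≤ z.re) (him : 0 ≤ z.im) :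
    z ^ (2⁻¹ : ℂ) - 1 ∈ firstQuadrant := by
  rw [mem_firstQuadrant, sub_re, sub_im, one_re, one_im, sub_zero, sub_nonneg, cpow_inv_two_re,
    cpow_inv_two_im_eq_sqrt him, Real.one_le_sqrt]
  exact ⟨by linarith [re_le_norm z], Real.sqrt_nonneg _⟩

end Sectors

section OmegaSym

variable {μ ρ : ℝ} {z : ℂ}

lemma omegaSym_eq_cpow_inv_two (μ ρ : ℝ) (z : ℂ) :
    omegaSym μ ρ z = (1 + ((ρ / μ : ℝ) : ℂ) * z) ^ (2⁻¹ : ℂ) := by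
  rw [omegaSym, one_div, ofReal_div, div_mul_eq_mul_div]

lemma one_le_re_one_add_ofReal_mul {t : ℝ} (ht : 0 ≤ t) (hz : 0 ≤ z.re) :
    1 ≤ (1 + (t : ℂ) * z).re := by
  rw [add_re, one_re, re_ofReal_mul]
  exact le_add_of_nonneg_right (mul_nonneg ht hz)

lemma im_one_add_ofReal_mul_nonneg {t : ℝ} (ht : 0 ≤ t) (hz : 0 ≤ z.im) :
    0 ≤ (1 + (t : ℂ) * z).im := by
  rw [add_im, one_im, im_ofReal_mul, zero_add]
  exact mul_nonneg ht hz

lemma omegaSym_mem_firstOctant (h : 0 ≤ ρ / μ) (hre : 0 ≤ z.re) (him : 0 ≤ z.im) :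
    omegaSym μ ρ z ∈ firstOctant := by
  rw [omegaSym_eq_cpow_inv_two]
  exact cpow_inv_two_mem_firstOctant
    (zero_le_one.trans (one_le_re_one_add_ofReal_mul h hre)) (im_one_add_ofReal_mul_nonneg h him)

lemma omegaSym_sub_one_mem_firstQuadrant (h : 0 ≤ ρ / μ) (hre : 0 ≤ z.re) (him : 0 ≤ z.im) :
    omegaSym μ ρ z - 1 ∈ firstQuadrant := by
  rw [omegaSym_eq_cpow_inv_two]
  exact cpow_inv_two_sub_one_mem_firstQuadrant
    (one_le_re_one_add_ofReal_mul h hre) (im_one_add_ofReal_mul_nonneg h him)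

lemma omegaSym_conj (h : 0 ≤ ρ / μ) (hre : 0 ≤ z.re) :
    omegaSym μ ρ (conj z) = conj (omegaSym μ ρ z) := by
  have harg : (1 + ((ρ / μ : ℝ) : ℂ) * z).arg ≠ Real.pi :=
    slitPlane_arg_ne_pi (.inl (zero_lt_one.trans_le (one_le_re_one_add_ofReal_mul h hre)))
  have hconj : 1 + ((ρ / μ : ℝ) : ℂ) * conj z = conj (1 + ((ρ / μ : ℝ) : ℂ) * z) := by
    rw [map_add, map_one, map_mul, conj_ofReal]
  rw [omegaSym_eq_cpow_inv_two, omegaSym_eq_cpow_inv_two, hconj, conj_cpow _ _ harg, map_inv₀,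
    conj_ofNat]

end OmegaSym

/-- The summands of `r₂` in which both roots occur. -/
def mixedPart {R : Type*} [CommRing R] (v w : R) : R :=
  (v + w) * (v + 1) * (w + 1) + 2 * (v - 1) * (w - 1)

/-- The single-root summand of `r₂`, which is weighted by a ratio of the `μᵢ`. -/
def diagonalPart {R : Type*} [CommRing R] (w : R) : R :=
  2 * (w - 1) + (w ^ 2 + 1) * (w + 1)

/-- The polynomial behind `r₂`, with `k`, `l`, `v`, `w` in place of `μ₂/μ₁`, `μ₁/μ₂`, `ω₁`, `ω₂`.
It is defined over any commutative ring so that it can be transported along complex conjugation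
and along `ℝ → ℂ`. -/
def reducedLopatinskii {R : Type*} [CommRing R] (k l v w : R) : R :=
  mixedPart v w + k * diagonalPart w + l * diagonalPart v

lemma map_reducedLopatinskii {R S : Type*} [CommRing R] [CommRing S] (f : R →+* S) (k l v w : R) :
    f (reducedLopatinskii k l v w) = reducedLopatinskii (f k) (f l) (f v) (f w) := by
  simp only [reducedLopatinskii, mixedPart, diagonalPart, map_add, map_mul, map_sub, map_pow,
    map_one, map_ofNat]

lemma reducedLopatinskii_pos {R : Type*} [CommRing R] [LinearOrder R] [IsStrictOrderedRing R]
    {k l v w : R} (hk : 0 ≤ k) (hl : 0 ≤ l) (hv : 1 ≤ v) (hw : 1 ≤ w) :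
    0 < reducedLopatinskii k l v w := by
  have : 0 ≤ v - 1 := sub_nonneg.2 hv
  have : 0 ≤ w - 1 := sub_nonneg.2 hw
  have : 0 < v := zero_lt_one.trans_le hv
  have : 0 < w := zero_lt_one.trans_le hw
  unfold reducedLopatinskii mixedPart diagonalPart
  positivity

section ImaginaryPart

variable {k l : ℝ} {v w : ℂ}

lemma im_mixedPart_nonneg (hv : v ∈ firstOctant) (hw : w ∈ firstOctant)
    (hv_sub : v - 1 ∈ firstQuadrant) (hw_sub : w - 1 ∈ firstQuadrant) :
    0 ≤ (mixedPart v w).im := by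
  have hcubic : 0 ≤ ((v + w) * (v + 1) * (w + 1)).im :=
    im_mul_nonneg_of_mem_firstQuadrant
      (mul_mem_firstQuadrant_of_mem_firstOctant (add_mem hv hw) (add_mem hv one_mem_firstOctant))
      (firstOctant_le_firstQuadrant (add_mem hw one_mem_firstOctant))
  have hquadratic : 0 ≤ (2 * (v - 1) * (w - 1)).im := by
    rw [two_mul]
    exact im_mul_nonneg_of_mem_firstQuadrant (add_mem hv_sub hv_sub) hw_sub
  rw [mixedPart, add_im]
  exact add_nonneg hcubic hquadratic

lemma two_mul_im_le_im_diagonalPart (hw : w ∈ firstOctant) :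
    2 * w.im ≤ (diagonalPart w).im := by
  have hone : (1 : ℂ) ∈ firstQuadrant := firstOctant_le_firstQuadrant one_mem_firstOctant
  have hprod : 0 ≤ ((w ^ 2 + 1) * (w + 1)).im := by
    rw [sq]
    exact im_mul_nonneg_of_mem_firstQuadrant
      (add_mem (mul_mem_firstQuadrant_of_mem_firstOctant hw hw) hone)
      (add_mem (firstOctant_le_firstQuadrant hw) hone)
  have hlinear : (2 * (w - 1)).im = 2 * w.im := by simp
  rw [diagonalPart, add_im, hlinear]
  exact le_add_of_nonneg_right hprod

lemma le_im_reducedLopatinskii (hk : 0 ≤ k) (hl : 0 ≤ l)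
    (hv : v ∈ firstOctant) (hw : w ∈ firstOctant)
    (hv_sub : v - 1 ∈ firstQuadrant) (hw_sub : w - 1 ∈ firstQuadrant) :
    k * (2 * w.im) + l * (2 * v.im) ≤ (reducedLopatinskii (k : ℂ) l v w).im := by
  rw [reducedLopatinskii, add_im, add_im, im_ofReal_mul, im_ofReal_mul]
  exact add_le_add
    (le_add_of_nonneg_of_le (im_mixedPart_nonneg hv hw hv_sub hw_sub)
      (mul_le_mul_of_nonneg_left (two_mul_im_le_im_diagonalPart hw) hk))
    (mul_le_mul_of_nonneg_left (two_mul_im_le_im_diagonalPart hv) hl)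

lemma reducedLopatinskii_ne_zero (hk : 0 < k) (hl : 0 < l)
    (hv : v ∈ firstOctant) (hw : w ∈ firstOctant)
    (hv_sub : v - 1 ∈ firstQuadrant) (hw_sub : w - 1 ∈ firstQuadrant) :
    reducedLopatinskii (k : ℂ) l v w ≠ 0 := by
  intro hzero
  have hle := le_im_reducedLopatinskii hk.le hl.le hv hw hv_sub hw_sub
  rw [hzero, zero_im] at hle
  have hkw : 0 ≤ k * (2 * w.im) := mul_nonneg hk.le (mul_nonneg zero_le_two hw.1)
  have hlv : 0 ≤ l * (2 * v.im) := mul_nonneg hl.le (mul_nonneg zero_le_two hv.1)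
  have hv_im : v.im = 0 := by
    simpa [hl.ne'] using (by linarith : l * (2 * v.im) = 0)
  have hw_im : w.im = 0 := by
    simpa [hk.ne'] using (by linarith : k * (2 * w.im) = 0)
  lift v to ℝ using hv_im
  lift w to ℝ using hw_im
  have hv_one : 1 ≤ v := by simpa using hv_sub.1
  have hw_one : 1 ≤ w := by simpa using hw_sub.1
  have hreal : ((reducedLopatinskii k l v w : ℝ) : ℂ) = 0 :=
    (map_reducedLopatinskii ofRealHom k l v w).trans hzero
  exact (reducedLopatinskii_pos hk.le hl.le hv_one hw_one).ne' (ofReal_eq_zero.1 hreal)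

end ImaginaryPart

lemma r2Sym_eq_reducedLopatinskii (μ₁ μ₂ ρ₁ ρ₂ : ℝ) (z : ℂ) :
    r2Sym μ₁ μ₂ ρ₁ ρ₂ z = reducedLopatinskii ((μ₂ / μ₁ : ℝ) : ℂ) ((μ₁ / μ₂ : ℝ) : ℂ)
      (omegaSym μ₁ ρ₁ z) (omegaSym μ₂ ρ₂ z) := by
  rw [ofReal_div, ofReal_div, r2Sym, reducedLopatinskii, mixedPart, diagonalPart, diagonalPart]

lemma r2Sym_conj {μ₁ μ₂ ρ₁ ρ₂ : ℝ} {z : ℂ} (h₁ : 0 ≤ ρ₁ / μ₁) (h₂ : 0 ≤ ρ₂ / μ₂)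
    (hre : 0 ≤ z.re) :
    r2Sym μ₁ μ₂ ρ₁ ρ₂ (conj z) = conj (r2Sym μ₁ μ₂ ρ₁ ρ₂ z) := by
  rw [r2Sym_eq_reducedLopatinskii, r2Sym_eq_reducedLopatinskii, map_reducedLopatinskii,
    omegaSym_conj h₁ hre, omegaSym_conj h₂ hre, conj_ofReal, conj_ofReal]

/-- `r₂(z) ≠ 0` for `Re z ≥ 0`. -/
theorem r2_ne_zero (μ₁ μ₂ ρ₁ ρ₂ : ℝ)
    (hμ₁ : 0 < μ₁) (hμ₂ : 0 < μ₂) (hρ₁ : 0 < ρ₁) (hρ₂ : 0 < ρ₂) :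
    ∀ z : ℂ, 0 ≤ z.re → r2Sym μ₁ μ₂ ρ₁ ρ₂ z ≠ 0 := by
  intro z hre
  have h₁ : 0 ≤ ρ₁ / μ₁ := (div_pos hρ₁ hμ₁).le
  have h₂ : 0 ≤ ρ₂ / μ₂ := (div_pos hρ₂ hμ₂).le
  wlog him : 0 ≤ z.im generalizing z
  · have hconj : r2Sym μ₁ μ₂ ρ₁ ρ₂ (conj z) ≠ 0 :=
      this (conj z) hre (by simpa using (not_le.1 him).le)
    rwa [r2Sym_conj h₁ h₂ hre, map_ne_zero] at hconj
  rw [r2Sym_eq_reducedLopatinskii]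
  exact reducedLopatinskii_ne_zero (div_pos hμ₂ hμ₁) (div_pos hμ₁ hμ₂)
    (omegaSym_mem_firstOctant h₁ hre him) (omegaSym_mem_firstOctant h₂ hre him)
    (omegaSym_sub_one_mem_firstQuadrant h₁ hre him)
    (omegaSym_sub_one_mem_firstQuadrant h₂ hre him)
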